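/- For each ordinal α < ε₀, the function F^⋄_{ε₀+α} is eventually dominated by F_{ε₀}: there is a natural number N such that F^⋄_{ε₀+α}(n) ≤ F_{ε₀}(n) for all n ≥ N. -/

import Mathlib

/-!
Fix `n ≥ 1`. For arguments `x < F_{ε₀}(n)` the inverse satisfies `F_{ε₀}^{-1}(x) < n`, so there
`F^⋄_{ε₀}(x) ≤ F_{ω_n}(x)`. Induction on `α < ω_n` lifts this to `F^⋄_{ε₀+α}(x) ≤ F_{ω_n+α}(x)`
as long as the right-hand side is below `F_{ε₀}(n)` (`slow_le`): the two recursions run in parallel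
because `{ω_n + α}(x) = ω_n + {α}(x)` (`fs_add`), and in the successor case all intermediate
iterates are below the final value.

It remains to see that `F_{ω_n+α}(n) < F_{ε₀}(n) = F_{ω_{n+1}}(n)` for all large `n`. Comparisons
of fast-growing functions at an argument `x` follow from the step-down relation `→_x` (`fgh_sd`).
Pick `m` with `α < ω_m`. For large `n` one has `ω_m →_n α + 1` (`eventually_sd`, a consequence of
convergence of fundamental sequences and of the Bachmann property), and therefore
`ω_{n+1} →_n ω_n + ω_n →_n ω_n + ω_m →_n ω_n + α + 1` (`sd_tower_double`, `sd_tower`, `sd_add`).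
The successor gives the strict inequality.
-/

open Ordinal
open scoped Classical

noncomputable section

/-- `omegaTower m α` is `ω_m^α`: the `m`-fold iterated `ω`-power tower on top of `α`. -/
noncomputable def omegaTower : ℕ → Ordinal.{0} → Ordinal.{0}
  | 0, α => α
  | m + 1, α => omega0 ^ (omegaTower m α)

/-- `ε₀`, the least ordinal `ε` with `ω ^ ε = ε`. -/
noncomputable def eps0 : Ordinal.{0} := Ordinal.nfp (fun a => omega0 ^ a) 0

/-- The fundamental sequence `{α}(n)` for ordinals below `ε₀`:
`{0}(n) = 0`, `{β+1}(n) = β`, and for a limit `α = β + ω^γ·(k+1)` (with `γ > 0` the least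
exponent of the Cantor normal form) we set `{α}(n) = β + ω^γ·k + ω^δ·(n+1)` if `γ = δ+1`
and `{α}(n) = β + ω^γ·k + ω^{{γ}(n)}` if `γ` is a limit.  Here `γ` is recovered as the
largest exponent with `ω^γ ∣ α`, and `β + ω^γ·k = ω^γ · pred (α / ω^γ)`. -/
noncomputable def fundSeq (α : Ordinal.{0}) (n : ℕ) : Ordinal.{0} :=
  if _h0 : α = 0 then 0
  else if hs : ∃ β, α = β + 1 then Classical.choose hs
  else
    let γ : Ordinal := sSup {c : Ordinal | omega0 ^ c ∣ α}
    if hγ : ∃ δ, γ = δ + 1 then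
      omega0 ^ γ * Ordinal.pred (α / omega0 ^ γ) +
        omega0 ^ (Classical.choose hγ) * ((n : Ordinal) + 1)
    else if hlt : γ < α then
      omega0 ^ γ * Ordinal.pred (α / omega0 ^ γ) + omega0 ^ (fundSeq γ n)
    else 0
termination_by α
decreasing_by exact hlt

/-- The step-down relation `β →_n γ`: there is a finite sequence from `β` to `γ`
each step of which descends to the `n`-th member of the fundamental sequence. -/
def stepDown (n : ℕ) (β γ : Ordinal.{0}) : Prop :=
  Relation.ReflTransGen (fun a b => fundSeq a n = b) β γ

/-- The fast-growing hierarchy `F_α` for `α < ε₀`: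
`F_0(x) = x+1`, `F_{α+1}(x) = F_α^[x+1](x)`, `F_λ(x) = F_{{λ}(x)}(x)` for limits. -/
noncomputable def fgh (α : Ordinal.{0}) : ℕ → ℕ :=
  if _h0 : α = 0 then fun x => x + 1
  else if hs : ∃ β, α = β + 1 then fun x => (fgh (Classical.choose hs))^[x + 1] x
  else fun x => if hlt : fundSeq α x < α then fgh (fundSeq α x) x else 0
termination_by α
decreasing_by
  · calc Classical.choose hs < Classical.choose hs + 1 := by
          rw [Ordinal.add_one_eq_succ]; exact Order.lt_succ _
      _ = α := (Classical.choose_spec hs).symm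
  · exact hlt

/-- `F_{ε₀}(x) := F_{ω_{x+1}}(x)`. -/
noncomputable def Feps0 (x : ℕ) : ℕ := fgh (omegaTower (x + 1) 1) x

/-- The inverse `F_{ε₀}^{-1}(x) := max({z ≤ x : F_{ε₀}(z) ≤ x} ∪ {0})`. -/
noncomputable def Feps0Inv (x : ℕ) : ℕ :=
  sSup ({z : ℕ | z ≤ x ∧ Feps0 z ≤ x} ∪ {0})

/-- The slow function `F^⋄_{ε₀}(x) := F_{ω_{F_{ε₀}^{-1}(x)+1}}(x)`. -/
noncomputable def slowFeps0 (x : ℕ) : ℕ := fgh (omegaTower (Feps0Inv x + 1) 1) x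

/-- The slow hierarchy `F^⋄_{ε₀+α}` for `α < ε₀`:
`F^⋄_{ε₀+0} = F^⋄_{ε₀}`, `F^⋄_{ε₀+α+1}(n) = (F^⋄_{ε₀+α})^[n+1](n)`, and
`F^⋄_{ε₀+λ}(n) = F^⋄_{ε₀+{λ}(n)}(n)` for limits `λ`. -/
noncomputable def slowF (α : Ordinal.{0}) : ℕ → ℕ :=
  if _h0 : α = 0 then slowFeps0
  else if hs : ∃ β, α = β + 1 then fun n => (slowF (Classical.choose hs))^[n + 1] n
  else fun n => if hlt : fundSeq α n < α then slowF (fundSeq α n) n else 0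
termination_by α
decreasing_by
  · calc Classical.choose hs < Classical.choose hs + 1 := by
          rw [Ordinal.add_one_eq_succ]; exact Order.lt_succ _
      _ = α := (Classical.choose_spec hs).symm
  · exact hlt

/-- A nonempty finite set of naturals is *large* if its cardinality is at least
its minimum. -/
def IsLargeSet (Y : Finset ℕ) : Prop := ∃ hY : Y.Nonempty, Y.min' hY ≤ Y.card

/-- The Paris–Harrington statement `PH(k, m, n, N)`: every `k`-colouring of the
`n`-element subsets of `{0, …, N-1}` admits a large homogeneous set with at least
`m` elements. -/
def PH (k m n N : ℕ) : Prop :=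
  ∀ f : Finset ℕ → Fin k,
    ∃ Y : Finset ℕ, Y ⊆ Finset.range N ∧ m ≤ Y.card ∧ IsLargeSet Y ∧
      ∀ s t : Finset ℕ, s ⊆ Y → t ⊆ Y → s.card = n → t.card = n → f s = f t

/-- `σ(n, k)`: the least `N` such that every `k`-colouring of the `n`-element subsets of
`{0, …, N-1}` admits a large homogeneous set with at least `n+1` elements. -/
noncomputable def sigmaPH (n k : ℕ) : ℕ := sInf {N | PH k (n + 1) n N}

/-! ### Computing fundamental sequences -/

theorem one_lt_om : (1 : Ordinal.{0}) < ω := one_lt_omega0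

theorem opow_om_pos (c : Ordinal.{0}) : (0 : Ordinal.{0}) < ω ^ c := opow_pos c omega0_pos

theorem opow_mul_nat_lt (δ : Ordinal.{0}) (n : ℕ) :
    ω ^ δ * ((n : Ordinal) + 1) < ω ^ (δ + 1) := by
  exact_mod_cast opow_mul_lt_opow (natCast_lt_omega0 (n + 1)) (Order.lt_succ δ)

theorem mul_cast_two (o : Ordinal.{0}) : o * ((2 : ℕ) : Ordinal) = o + o := by
  rw [Nat.cast_two, ← one_add_one_eq_two, mul_add_one, mul_one]

/-- Every nonzero ordinal is `ω ^ c * (μ + 1)`, where `c` is the least exponent of its Cantor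
normal form. All computations with `fundSeq` use this representation. -/
theorem exists_form (α : Ordinal.{0}) (h0 : α ≠ 0) :
    ∃ c μ : Ordinal.{0}, α = ω ^ c * (μ + 1) := by
  induction α using WellFoundedLT.induction with
  | ind α ih =>
    have hdm := Ordinal.div_add_mod α (ω ^ log ω α)
    by_cases hr : α % (ω ^ log ω α) = 0
    · rw [hr, add_zero] at hdm
      obtain ⟨k, hk⟩ := lt_omega0.1 (div_opow_log_lt α one_lt_om)
      rw [hk] at hdm
      cases k with
      | zero => simp at hdm; exact absurd hdm.symm h0
      | succ k => exact ⟨log ω α, k, by exact_mod_cast hdm.symm⟩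
    · obtain ⟨c, μ, hc⟩ := ih _ (mod_opow_log_lt_self ω h0) hr
      have hlt : α % (ω ^ log ω α) < ω ^ log ω α := mod_lt _ (opow_om_pos _).ne'
      have hcl : c ≤ log ω α := by
        rw [← opow_le_opow_iff_right one_lt_om]
        refine le_trans ?_ hlt.le
        rw [hc]
        exact Ordinal.le_mul_left _ (by simp)
      obtain ⟨d, hd⟩ := opow_dvd_opow ω hcl
      refine ⟨c, d * (α / ω ^ log ω α) + μ, ?_⟩
      rw [add_assoc, mul_add, ← hc, ← mul_assoc, ← hd, hdm]

/-- The exponent set used by `fundSeq` has the greatest element `c`, so its supremum is `c`. -/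
theorem exps_form (c μ : Ordinal.{0}) :
    {e : Ordinal.{0} | ω ^ e ∣ ω ^ c * (μ + 1)} = Set.Iic c := by
  ext e
  simp only [Set.mem_ofPred_eq, Set.mem_Iic]
  constructor
  · intro h
    by_contra hlt
    push Not at hlt
    have h1 : ω ^ (c + 1) ∣ ω ^ c * (μ + 1) :=
      (opow_dvd_opow ω (Order.add_one_le_of_lt hlt)).trans h
    obtain ⟨k, hk⟩ := h1
    rw [opow_add_one, mul_assoc] at hk
    have h2 : μ + 1 = ω * k := mul_left_cancel₀ (opow_om_pos c).ne' hk
    have h3 : Order.IsSuccPrelimit (μ + 1) := isSuccPrelimit_iff_omega0_dvd.2 ⟨k, h2⟩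
    exact Order.not_isSuccPrelimit_succ μ h3
  · intro h
    exact (opow_dvd_opow ω h).trans (Dvd.intro _ rfl)

theorem fs_zero (n : ℕ) : fundSeq 0 n = 0 := by
  rw [fundSeq]; simp

theorem fs_succ (β : Ordinal.{0}) (n : ℕ) : fundSeq (β + 1) n = β := by
  have hs : ∃ γ, β + 1 = γ + 1 := ⟨β, rfl⟩
  rw [fundSeq, dif_neg (by simp), dif_pos hs]
  exact (Order.succ_injective (Classical.choose_spec hs)).symm

theorem form_limit {c : Ordinal.{0}} (hc : c ≠ 0) (μ : Ordinal.{0}) :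
    Order.IsSuccLimit (ω ^ c * (μ + 1)) := 
  isSuccLimit_mul_left (isSuccLimit_opow_left isSuccLimit_omega0 hc) (by simp)

theorem limit_ne_zero {α : Ordinal.{0}} (h : Order.IsSuccLimit α) : α ≠ 0 := by
  rintro rfl
  exact not_isSuccLimit_zero h

theorem limit_ne_succ {α : Ordinal.{0}} (h : Order.IsSuccLimit α) : ¬ ∃ β, α = β + 1 := by
  rintro ⟨β, rfl⟩
  exact Order.not_isSuccLimit_succ β h

theorem fs_form_succ (δ μ : Ordinal.{0}) (n : ℕ) :
    fundSeq (ω ^ (δ + 1) * (μ + 1)) n = ω ^ (δ + 1) * μ + ω ^ δ * ((n : Ordinal) + 1) := by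
  have hl := form_limit (c := δ + 1) (by simp) μ
  have hs : ∃ γ, δ + 1 = γ + 1 := ⟨δ, rfl⟩
  rw [fundSeq, dif_neg (limit_ne_zero hl), dif_neg (limit_ne_succ hl)]
  simp only [exps_form, csSup_Iic]
  rw [dif_pos hs, mul_div_cancel _ (opow_om_pos _).ne', pred_add_one,
    ← (Order.succ_injective (Classical.choose_spec hs) : δ = _)]

/-- The side condition fails exactly when `ω ^ c * (μ + 1)` is an epsilon number. -/
theorem fs_form_limit {c : Ordinal.{0}} (hc : Order.IsSuccLimit c) (μ : Ordinal.{0}) (n : ℕ)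
    (hlt : c < ω ^ c * (μ + 1)) :
    fundSeq (ω ^ c * (μ + 1)) n = ω ^ c * μ + ω ^ (fundSeq c n) := by
  have hl := form_limit (c := c) (limit_ne_zero hc) μ
  rw [fundSeq, dif_neg (limit_ne_zero hl), dif_neg (limit_ne_succ hl)]
  simp only [exps_form, csSup_Iic]
  rw [dif_neg (limit_ne_succ hc), dif_pos hlt, mul_div_cancel _ (opow_om_pos _).ne', pred_add_one]

/-- The default branch of `fundSeq`, taken only at epsilon numbers. -/
theorem fs_form_junk {c : Ordinal.{0}} (hc : Order.IsSuccLimit c) (μ : Ordinal.{0}) (n : ℕ)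
    (hlt : ¬ c < ω ^ c * (μ + 1)) :
    fundSeq (ω ^ c * (μ + 1)) n = 0 := by
  have hl := form_limit (c := c) (limit_ne_zero hc) μ
  rw [fundSeq, dif_neg (limit_ne_zero hl), dif_neg (limit_ne_succ hl)]
  simp only [exps_form, csSup_Iic]
  rw [dif_neg (limit_ne_succ hc), dif_neg hlt]

theorem cases3 (α : Ordinal.{0}) : α = 0 ∨ (∃ β, α = β + 1) ∨ Order.IsSuccLimit α := by
  rcases zero_or_succ_or_isSuccLimit α with h | ⟨β, h⟩ | h
  · exact .inl h
  · exact .inr (.inl ⟨β, h.symm⟩)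
  · exact .inr (.inr h)

theorem fundSeq_lt (α : Ordinal.{0}) (h0 : α ≠ 0) (n : ℕ) : fundSeq α n < α := by
  induction α using WellFoundedLT.induction with
  | ind α ih =>
    obtain ⟨c, μ, rfl⟩ := exists_form α h0
    rcases cases3 c with rfl | ⟨δ, rfl⟩ | hc
    · simp only [opow_zero, one_mul, fs_succ]
      exact Order.lt_succ μ
    · rw [fs_form_succ, mul_add_one (ω ^ (δ + 1))]
      exact (add_lt_add_iff_left (ω ^ (δ + 1) * μ)).2 (opow_mul_nat_lt δ n)
    · by_cases hlt : c < ω ^ c * (μ + 1)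
      · rw [fs_form_limit hc μ n hlt, mul_add_one]
        have := ih c hlt (limit_ne_zero hc)
        exact (add_lt_add_iff_left _).2 ((opow_lt_opow_iff_right one_lt_om).2 this)
      · rw [fs_form_junk hc μ n hlt]
        exact pos_iff_ne_zero.2 h0

/-- Below `ε₀` there are no fixed points of `ω ^ ·`, so the default branch of `fundSeq` is never
taken. -/
theorem lt_opow_of_lt_eps0 {c : Ordinal.{0}} (hc : c < eps0) : c < ω ^ c := by
  by_contra h
  refine absurd hc (not_lt.2 (nfp_le_fp ?_ zero_le (not_lt.1 h)))
  exact (isNormal_opow one_lt_om).monotone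

theorem form_exp_lt {c μ : Ordinal.{0}} (h : ω ^ c * (μ + 1) < eps0) :
    c < eps0 ∧ c < ω ^ c * (μ + 1) := by
  have h1 : ω ^ c ≤ ω ^ c * (μ + 1) := Ordinal.le_mul_left _ (by simp)
  have hc : c < eps0 := ((right_le_opow c one_lt_om).trans h1).trans_lt h
  exact ⟨hc, (lt_opow_of_lt_eps0 hc).trans_le h1⟩

theorem opow_lt_eps0 {c : Ordinal.{0}} (hc : c < eps0) : ω ^ c < eps0 :=
  (apply_lt_nfp (isNormal_opow one_lt_om)).2 hc

theorem zero_lt_eps0 : (0 : Ordinal.{0}) < eps0 := by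
  unfold eps0
  rw [lt_nfp_iff]
  exact ⟨1, by simp⟩

theorem fs_form_limit' {c μ : Ordinal.{0}} (hc : Order.IsSuccLimit c) (n : ℕ)
    (h : c < eps0) :
    fundSeq (ω ^ c * (μ + 1)) n = ω ^ c * μ + ω ^ (fundSeq c n) :=
  fs_form_limit hc μ n ((lt_opow_of_lt_eps0 h).trans_le (Ordinal.le_mul_left _ (by simp)))

theorem fs_opow_limit {c : Ordinal.{0}} (hc : Order.IsSuccLimit c) (n : ℕ)
    (h : c < eps0) : fundSeq (ω ^ c) n = ω ^ (fundSeq c n) := by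
  simpa using fs_form_limit' (μ := 0) hc n h

theorem fs_opow_succ (δ : Ordinal.{0}) (n : ℕ) :
    fundSeq (ω ^ (δ + 1)) n = ω ^ δ * ((n : Ordinal) + 1) := by
  simpa using fs_form_succ δ 0 n

/-- Fundamental sequences commute with left addition of `ω ^ d * ν` as long as the right summand
is at most `ω ^ d`: then nothing is absorbed, and the last Cantor normal form term is that of the
right summand. -/
theorem fs_add {d ν α : Ordinal.{0}} (h0 : α ≠ 0) (hα : α < eps0) (hd : α ≤ ω ^ d) (n : ℕ) :
    fundSeq (ω ^ d * ν + α) n = ω ^ d * ν + fundSeq α n := by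
  obtain ⟨c, μ, rfl⟩ := exists_form α h0
  have hcd : c ≤ d := by
    rw [← opow_le_opow_iff_right one_lt_om]
    exact (Ordinal.le_mul_left _ (by simp)).trans hd
  obtain ⟨e, he⟩ := opow_dvd_opow ω hcd
  have key : ω ^ d * ν + ω ^ c * (μ + 1) = ω ^ c * (e * ν + μ + 1) := by
    rw [add_assoc (e * ν), mul_add _ (e * ν), ← mul_assoc, ← he]
  have key2 : ω ^ c * (e * ν + μ) = ω ^ d * ν + ω ^ c * μ := by
    rw [mul_add, ← mul_assoc, ← he]
  rw [key]
  rcases cases3 c with rfl | ⟨δ, rfl⟩ | hc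
  · simp only [opow_zero, one_mul, fs_succ] at *
    exact key2
  · rw [fs_form_succ, fs_form_succ, key2, add_assoc]
  · rw [fs_form_limit' hc n (form_exp_lt hα).1, fs_form_limit' hc n (form_exp_lt hα).1, key2, add_assoc]

/-! ### The step-down relation -/

theorem fundSeq_le (α : Ordinal.{0}) (n : ℕ) : fundSeq α n ≤ α := by
  by_cases h : α = 0
  · rw [h, fs_zero]
  · exact (fundSeq_lt α h n).le

theorem sd_refl (n : ℕ) (α : Ordinal.{0}) : stepDown n α α := Relation.ReflTransGen.refl

theorem sd_trans {n : ℕ} {α β γ : Ordinal.{0}} (h : stepDown n α β) (h' : stepDown n β γ) :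
    stepDown n α γ := Relation.ReflTransGen.trans h h'

theorem sd_one (n : ℕ) (α : Ordinal.{0}) : stepDown n α (fundSeq α n) :=
  Relation.ReflTransGen.single rfl

theorem sd_zero (n : ℕ) (α : Ordinal.{0}) : stepDown n α 0 := by
  induction α using WellFoundedLT.induction with
  | ind α ih =>
    by_cases h0 : α = 0
    · rw [h0]; exact sd_refl _ _
    · exact sd_trans (sd_one n α) (ih _ (fundSeq_lt α h0 n))

theorem sd_le {n : ℕ} {α β : Ordinal.{0}} (h : stepDown n α β) : β ≤ α := by
  induction h with
  | refl => exact le_rfl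
  | tail _ h2 ih => rw [← h2]; exact (fundSeq_le _ n).trans ih

/-- `fs_add` for whole descents. Steps of the form `0 → 0` in the right summand are matched by
no step at all. -/
theorem sd_add {n : ℕ} {d α α' : Ordinal.{0}} (ν : Ordinal.{0}) (h : stepDown n α α')
    (hα : α < eps0) (hd : α ≤ ω ^ d) :
    stepDown n (ω ^ d * ν + α) (ω ^ d * ν + α') := by
  induction h with
  | refl => exact sd_refl _ _
  | @tail b c h1 h2 ih =>
    have hb := sd_le h1
    refine sd_trans ih ?_
    by_cases h0 : b = 0
    · rw [h0, fs_zero] at h2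
      rw [h0, ← h2]
      exact sd_refl _ _
    · rw [← h2, ← fs_add h0 (hb.trans_lt hα) (hb.trans hd)]
      exact sd_one _ _

theorem sd_mul {n : ℕ} {δ : Ordinal.{0}} (hδ : δ < eps0) {k m : ℕ} (h : k ≤ m) :
    stepDown n (ω ^ δ * (m : Ordinal)) (ω ^ δ * (k : Ordinal)) := by
  induction h with
  | refl => exact sd_refl _ _
  | @step m _ ih =>
    refine sd_trans ?_ ih
    have := sd_add (n := n) (d := δ) (m : Ordinal) (sd_zero n (ω ^ δ)) (opow_lt_eps0 hδ) le_rfl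
    rw [add_zero, ← mul_add_one] at this
    exact_mod_cast this

theorem sd_opow_succ {n : ℕ} {δ : Ordinal.{0}} (hδ : δ < eps0) {k : ℕ} (h : k ≤ n + 1) :
    stepDown n (ω ^ (δ + 1)) (ω ^ δ * (k : Ordinal)) := by
  have h1 := sd_one n (ω ^ (δ + 1))
  rw [fs_opow_succ] at h1
  refine sd_trans h1 ?_
  exact_mod_cast sd_mul (n := n) hδ h

theorem sd_opow {n : ℕ} {γ γ' : Ordinal.{0}} (h : stepDown n γ γ') (hγ : γ < eps0) :
    stepDown n (ω ^ γ) (ω ^ γ') := by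
  induction h with
  | refl => exact sd_refl _ _
  | @tail b c h1 h2 ih =>
    have hb := (sd_le h1).trans_lt hγ
    refine sd_trans ih ?_
    subst h2
    rcases cases3 b with rfl | ⟨δ, rfl⟩ | hc
    · rw [fs_zero]; exact sd_refl _ _
    · rw [fs_succ]
      simpa using sd_opow_succ (n := n) (k := 1) ((Order.lt_succ δ).trans hb) (by omega)
    · rw [← fs_opow_limit hc n hb]
      exact sd_one _ _

/-- Bachmann property: `{β}(j) →_n {β}(k)` whenever `k ≤ j`, for every base `n`. -/
theorem bachmann (n : ℕ) {j k : ℕ} (hkj : k ≤ j) (β : Ordinal.{0}) (hβ : β < eps0) :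
    stepDown n (fundSeq β j) (fundSeq β k) := by
  induction β using WellFoundedLT.induction with
  | ind β ih =>
    by_cases h0 : β = 0
    · rw [h0, fs_zero, fs_zero]; exact sd_refl _ _
    obtain ⟨c, μ, rfl⟩ := exists_form β h0
    obtain ⟨hce, hcl⟩ := form_exp_lt hβ
    rcases cases3 c with rfl | ⟨δ, rfl⟩ | hc
    · simp only [opow_zero, one_mul, fs_succ]; exact sd_refl _ _
    · have hδ : δ < eps0 := (Order.lt_succ δ).trans hce
      rw [fs_form_succ, fs_form_succ]
      have hlt := opow_mul_nat_lt δ j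
      refine sd_add μ ?_ (hlt.trans (opow_lt_eps0 hce)) hlt.le
      exact_mod_cast sd_mul (n := n) hδ (Nat.succ_le_succ hkj)
    · rw [fs_form_limit' hc _ hce, fs_form_limit' hc _ hce]
      have hle := fundSeq_le c j
      exact sd_add μ (sd_opow (ih c hcl hce) (hle.trans_lt hce)) (opow_lt_eps0 (hle.trans_lt hce))
        (opow_le_opow_right omega0_pos hle)

theorem lt_add_split {a b c : Ordinal.{0}} (h : a < b + c) (hc : 0 < c) : ∃ d < c, a ≤ b + d := by
  rcases le_total b a with hba | hab
  · refine ⟨a - b, ?_, (Ordinal.add_sub_cancel_of_le hba).ge⟩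
    rw [← Ordinal.add_sub_cancel_of_le hba] at h
    exact (add_lt_add_iff_left b).1 h
  · exact ⟨0, hc, by simpa using hab⟩

/-- The fundamental sequence of a limit below `ε₀` converges to it. -/
theorem cofinal (β : Ordinal.{0}) (hβ : β < eps0) (hl : Order.IsSuccLimit β) (α : Ordinal.{0})
    (hα : α < β) : ∃ k, α ≤ fundSeq β k := by
  induction β using WellFoundedLT.induction generalizing α with
  | ind β ih =>
    obtain ⟨c, μ, rfl⟩ := exists_form β (limit_ne_zero hl)
    obtain ⟨hce, hcl⟩ := form_exp_lt hβ
    rw [mul_add_one] at hα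
    obtain ⟨d, hd, hle⟩ := lt_add_split hα (opow_om_pos c)
    rcases cases3 c with rfl | ⟨δ, rfl⟩ | hc
    · simp only [opow_zero, one_mul] at hl
      exact absurd ⟨μ, rfl⟩ (limit_ne_succ hl)
    · obtain ⟨k, hk⟩ := lt_omega0_opow_succ.1 hd
      refine ⟨k, hle.trans ?_⟩
      rw [fs_form_succ]
      gcongr
      refine hk.le.trans ?_
      gcongr
      exact (Order.le_succ _)
    · obtain ⟨c', hc', hd'⟩ := (lt_opow_of_isSuccLimit omega0_ne_zero hc).1 hd
      obtain ⟨k, hk⟩ := ih c hcl hce hc c' hc'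
      refine ⟨k, hle.trans ?_⟩
      rw [fs_form_limit' hc _ hce]
      gcongr
      exact hd'.le.trans (opow_le_opow_right omega0_pos hk)

/-- For fixed `α ≤ β < ε₀`, the ordinal `β` steps down to `α` for all large bases. At a limit
`β`, convergence gives some `{β}(k) ≥ α`, and the Bachmann property connects `{β}(x)` with `{β}(k)`
once `x ≥ k`. -/
theorem eventually_sd (β : Ordinal.{0}) (hβ : β < eps0) (α : Ordinal.{0}) (hα : α ≤ β) :
    ∃ N, ∀ x ≥ N, stepDown x β α := by
  induction β using WellFoundedLT.induction with
  | ind β ih =>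
    rcases hα.eq_or_lt with rfl | hlt
    · exact ⟨0, fun x _ => sd_refl _ _⟩
    rcases cases3 β with rfl | ⟨δ, rfl⟩ | hc
    · exact absurd hlt not_lt_zero
    · have hδ := Order.lt_succ δ
      obtain ⟨N, hN⟩ := ih δ hδ (hδ.trans hβ) (Order.lt_succ_iff.1 hlt)
      refine ⟨N, fun x hx => sd_trans ?_ (hN x hx)⟩
      have := sd_one x (δ + 1)
      rwa [fs_succ] at this
    · obtain ⟨k, hk⟩ := cofinal β hβ hc α hlt
      have hkl := fundSeq_lt β (limit_ne_zero hc) k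
      obtain ⟨N, hN⟩ := ih _ hkl (hkl.trans hβ) hk
      refine ⟨max N k, fun x hx => sd_trans (sd_one x β) (sd_trans (bachmann x (le_of_max_le_right hx) β hβ)
        (hN x (le_of_max_le_left hx)))⟩

/-! ### Recursion equations and monotonicity of the hierarchies -/

theorem fgh_zero (x : ℕ) : fgh 0 x = x + 1 := by
  rw [fgh]; simp

theorem fgh_succ (β : Ordinal.{0}) (x : ℕ) : fgh (β + 1) x = (fgh β)^[x + 1] x := by
  have hs : ∃ γ, β + 1 = γ + 1 := ⟨β, rfl⟩
  rw [fgh, dif_neg (by simp), dif_pos hs,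
    ← (Order.succ_injective (Classical.choose_spec hs) : β = _)]

theorem fgh_limit {α : Ordinal.{0}} (h : Order.IsSuccLimit α) (x : ℕ) :
    fgh α x = fgh (fundSeq α x) x := by
  rw [fgh, dif_neg (limit_ne_zero h), dif_neg (limit_ne_succ h)]
  simp only [dif_pos (fundSeq_lt α (limit_ne_zero h) x)]

theorem slowF_zero : slowF 0 = slowFeps0 := by
  rw [slowF]; simp

theorem slowF_succ (β : Ordinal.{0}) (x : ℕ) : slowF (β + 1) x = (slowF β)^[x + 1] x := by
  have hs : ∃ γ, β + 1 = γ + 1 := ⟨β, rfl⟩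
  rw [slowF, dif_neg (by simp), dif_pos hs,
    ← (Order.succ_injective (Classical.choose_spec hs) : β = _)]

theorem slowF_limit {α : Ordinal.{0}} (h : Order.IsSuccLimit α) (x : ℕ) :
    slowF α x = slowF (fundSeq α x) x := by
  rw [slowF, dif_neg (limit_ne_zero h), dif_neg (limit_ne_succ h)]
  simp only [dif_pos (fundSeq_lt α (limit_ne_zero h) x)]

theorem lt_fgh (α : Ordinal.{0}) (x : ℕ) : x < fgh α x := by
  induction α using WellFoundedLT.induction generalizing x with
  | ind α ih =>
    rcases cases3 α with rfl | ⟨δ, rfl⟩ | hc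
    · rw [fgh_zero]; omega
    · have h := ih δ (Order.lt_succ δ)
      rw [fgh_succ, Function.iterate_succ_apply']
      exact (Function.id_le_iterate_of_id_le (fun y => (h y).le) x x).trans_lt (h _)
    · rw [fgh_limit hc]
      exact ih _ (fundSeq_lt α (limit_ne_zero hc) x) x

theorem fgh_le_succ (β : Ordinal.{0}) (x : ℕ) : fgh β x ≤ fgh (β + 1) x := by
  rw [fgh_succ, Function.iterate_succ_apply]
  exact Function.id_le_iterate_of_id_le (fun y => (lt_fgh β y).le) x _

/-- Step-down at base `x` compares the fast-growing functions at the argument `x`. -/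
theorem fgh_sd {x : ℕ} {α β : Ordinal.{0}} (h : stepDown x α β) : fgh β x ≤ fgh α x := by
  induction h with
  | refl => exact le_rfl
  | @tail b c _ h2 ih =>
    refine le_trans ?_ ih
    subst h2
    rcases cases3 b with rfl | ⟨δ, rfl⟩ | hc
    · rw [fs_zero]
    · rw [fs_succ]; exact fgh_le_succ δ x
    · exact (fgh_limit hc x).ge

/-- At limits, the argument and the index grow together; the index is handled by the Bachmann
property. -/
theorem fgh_mono (α : Ordinal.{0}) (hα : α < eps0) : Monotone (fgh α) := by
  induction α using WellFoundedLT.induction with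
  | ind α ih =>
    intro x y hxy
    rcases cases3 α with rfl | ⟨δ, rfl⟩ | hc
    · rw [fgh_zero, fgh_zero]; omega
    · have hδ := Order.lt_succ δ
      rw [fgh_succ, fgh_succ]
      refine ((ih δ hδ (hδ.trans hα)).iterate (x + 1) hxy).trans ?_
      exact Function.monotone_iterate_of_id_le (fun y => (lt_fgh δ y).le) (by omega) y
    · have hl := fundSeq_lt α (limit_ne_zero hc) x
      rw [fgh_limit hc, fgh_limit hc]
      exact (ih _ hl (hl.trans hα) hxy).trans (fgh_sd (bachmann y hxy α hα))

/-! ### Step-down between towers -/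

theorem tower_lt_eps0 (m : ℕ) : omegaTower m 1 < eps0 := by
  induction m with
  | zero => simpa [omegaTower] using opow_lt_eps0 zero_lt_eps0
  | succ m ih => exact opow_lt_eps0 ih

theorem lt_tower {α : Ordinal.{0}} (h : α < eps0) : ∃ m, α < omegaTower m 1 := by
  obtain ⟨m, hm⟩ := lt_nfp_iff.1 h
  refine ⟨m, hm.trans_le ?_⟩
  clear hm
  induction m with
  | zero => simp
  | succ m ih =>
    rw [Function.iterate_succ_apply']
    exact opow_le_opow_right omega0_pos ih

theorem sd_tower_succ (x m : ℕ) : stepDown x (omegaTower (m + 1) 1) (omegaTower m 1) := by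
  induction m with
  | zero =>
    simpa [omegaTower] using sd_opow_succ (n := x) (k := 1) zero_lt_eps0 (by omega)
  | succ m ih => exact sd_opow ih (tower_lt_eps0 _)

theorem sd_tower (x : ℕ) {k m : ℕ} (h : k ≤ m) :
    stepDown x (omegaTower m 1) (omegaTower k 1) := by
  induction h with
  | refl => exact sd_refl _ _
  | step _ ih => exact sd_trans (sd_tower_succ x _) ih

/-- The bound `1 ≤ x` guarantees two copies of `ω ^ δ` in `{ω ^ (δ + 1)}(x)`; one is kept and the
other one descends to `1`. -/
theorem sd_tower_add {x : ℕ} (hx : 1 ≤ x) (m : ℕ) :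
    stepDown x (omegaTower (m + 1) 1) (omegaTower m 1 + 1) := by
  induction m with
  | zero =>
    have := sd_opow_succ (n := x) (k := 2) zero_lt_eps0 (by omega)
    simpa [omegaTower, one_add_one_eq_two] using this
  | succ m ih =>
    have h1 : stepDown x (omegaTower (m + 2) 1) (ω ^ (omegaTower m 1 + 1)) :=
      sd_opow ih (tower_lt_eps0 _)
    have h2 := sd_opow_succ (n := x) (k := 2) (tower_lt_eps0 m) (by omega)
    have h3 := sd_add (n := x) 1 (sd_tower x (Nat.zero_le (m + 1))) (tower_lt_eps0 (m + 1))
      (d := omegaTower m 1) le_rfl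
    rw [mul_one] at h3
    refine sd_trans h1 (sd_trans h2 ?_)
    rw [mul_cast_two]
    exact h3

theorem sd_tower_double {x : ℕ} (hx : 1 ≤ x) (m : ℕ) :
    stepDown x (omegaTower (m + 2) 1) (omegaTower (m + 1) 1 + omegaTower (m + 1) 1) := by
  have h1 : stepDown x (omegaTower (m + 2) 1) (ω ^ (omegaTower m 1 + 1)) :=
    sd_opow (sd_tower_add hx m) (tower_lt_eps0 _)
  have h2 := sd_opow_succ (n := x) (k := 2) (tower_lt_eps0 m) (by omega)
  rw [mul_cast_two] at h2
  exact sd_trans h1 h2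

/-! ### Comparison of the slow and the fast hierarchy -/

theorem Feps0_mono : Monotone Feps0 := by
  intro x y h
  exact (fgh_mono _ (tower_lt_eps0 _) h).trans (fgh_sd (sd_tower y (by omega)))

/-- Below the value `F_{ε₀}(n)` the inverse of `F_{ε₀}` is smaller than `n`. -/
theorem Feps0Inv_lt {n x : ℕ} (hn : 1 ≤ n) (h : x < Feps0 n) : Feps0Inv x < n := by
  have hb : ∀ z ∈ ({z : ℕ | z ≤ x ∧ Feps0 z ≤ x} ∪ {0} : Set ℕ), z < n := by
    rintro z (⟨_, hz⟩ | hz)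
    · by_contra hc
      exact absurd ((Feps0_mono (not_lt.1 hc)).trans hz) (not_le.2 h)
    · rw [Set.mem_singleton_iff.1 hz]; omega
  exact hb _ (Nat.sSup_mem ⟨0, .inr rfl⟩ ⟨n, fun z hz => (hb z hz).le⟩)

/-- Comparison on the interval below `F_{ε₀}(n + 1)`: while the values of `F_{ω_{n+1}+α}` stay below
this bound, the index used by the slow function never exceeds `ω_{n+1}`, so `F_{ω_{n+1}+α}`
majorizes `F^⋄_{ε₀+α}`. The assumption `α < ω_{n+1}` makes the recursions on both sides run in
parallel. -/
theorem slow_le (n : ℕ) (α : Ordinal.{0}) (hα : α < omegaTower (n + 1) 1) (x : ℕ)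
    (hx : fgh (omegaTower (n + 1) 1 + α) x < Feps0 (n + 1)) :
    slowF α x ≤ fgh (omegaTower (n + 1) 1 + α) x := by
  induction α using WellFoundedLT.induction generalizing x with
  | ind α ih =>
    have hT : omegaTower (n + 1) 1 + α < eps0 := by
      have h2 : omegaTower (n + 1) 1 + α < omegaTower (n + 1) 1 + omegaTower (n + 1) 1 :=
        (add_lt_add_iff_left _).2 hα
      exact h2.trans_le ((sd_le (sd_tower_double le_rfl n))) |>.trans (tower_lt_eps0 _)
    rcases cases3 α with rfl | ⟨δ, rfl⟩ | hc
    · rw [add_zero] at hx ⊢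
      rw [slowF_zero]
      have := Feps0Inv_lt (by omega) ((lt_fgh _ x).trans hx)
      exact fgh_sd (sd_tower x (by omega))
    · have hδ := Order.lt_succ δ
      rw [← add_assoc] at hx ⊢ hT
      have hm := fgh_mono _ ((Order.lt_succ _).trans hT)
      have hid : id ≤ fgh (omegaTower (n + 1) 1 + δ) := fun y => (lt_fgh _ y).le
      rw [fgh_succ] at hx ⊢
      rw [slowF_succ]
      -- Every intermediate value is below the final one, hence below the bound in `hx`.
      have key : ∀ i ≤ x + 1, (slowF δ)^[i] x ≤ (fgh (omegaTower (n + 1) 1 + δ))^[i] x := by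
        intro i hi
        induction i with
        | zero => exact le_rfl
        | succ i ihi =>
          have h1 := hm (ihi (by omega))
          rw [Function.iterate_succ_apply', Function.iterate_succ_apply']
          refine (ih δ hδ (hδ.trans hα) _ (h1.trans_lt (lt_of_le_of_lt ?_ hx))).trans h1
          rw [← Function.iterate_succ_apply' (fgh (omegaTower (n + 1) 1 + δ))]
          exact Function.monotone_iterate_of_id_le hid hi x
      exact key _ le_rfl
    · have hl := fundSeq_lt α (limit_ne_zero hc) x
      have hs := fs_add (ν := 1) (limit_ne_zero hc) (hα.trans (tower_lt_eps0 _))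
        (d := omegaTower n 1) hα.le x
      rw [mul_one] at hs
      rw [fgh_limit (isSuccLimit_add _ hc)] at hx ⊢
      rw [slowF_limit hc]
      change fundSeq (omegaTower (n + 1) 1 + α) x = omegaTower (n + 1) 1 + fundSeq α x at hs
      rw [hs] at hx ⊢
      exact ih _ hl (hl.trans hα) x hx

/-- For each ordinal `α < ε₀`, the function `F^⋄_{ε₀+α}` is eventually dominated by `F_{ε₀}`. -/
theorem stmt7 : ∀ α : Ordinal.{0}, α < eps0 →
    ∃ N : ℕ, ∀ n : ℕ, N ≤ n → slowF α n ≤ Feps0 n := by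
  intro α hα
  obtain ⟨m, hm⟩ := lt_tower hα
  obtain ⟨N, hN⟩ := eventually_sd _ (tower_lt_eps0 m) (α + 1) (Order.add_one_le_of_lt hm)
  refine ⟨N + m + 1, fun n hn => ?_⟩
  obtain ⟨n, rfl⟩ : ∃ k, n = k + 1 := ⟨n - 1, by omega⟩
  have h1 : stepDown (n + 1) (omegaTower (n + 1) 1) (α + 1) :=
    sd_trans (sd_tower _ (by omega)) (hN _ (by omega))
  have h2 := sd_add 1 h1 (tower_lt_eps0 _) (d := omegaTower n 1) le_rfl
  rw [mul_one, ← add_assoc] at h2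
  have h3 := fgh_sd (sd_trans (sd_tower_double (by omega) n) h2)
  -- Descending to `α + 1` rather than `α` is what makes this inequality strict.
  have h4 : fgh (omegaTower (n + 1) 1 + α) (n + 1) < Feps0 (n + 1) := by
    refine lt_of_lt_of_le ?_ h3
    change _ < fgh (omegaTower (n + 1) 1 + α + 1) (n + 1)
    rw [fgh_succ]
    have hid : id ≤ fgh (omegaTower (n + 1) 1 + α) := fun y => (lt_fgh _ y).le
    have h5 := Function.monotone_iterate_of_id_le hid (show 2 ≤ n + 1 + 1 by omega) (n + 1)
    exact (lt_fgh (omegaTower (n + 1) 1 + α) _).trans_le h5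
  exact (slow_le n α (hm.trans_le (sd_le (sd_tower 0 (by omega)))) _ h4).trans h4.le

end
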